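/- arXiv:math/0411140 — 3 statements merged into one kernel-verified Lean document; each statement's English description precedes it below -/
import Mathlib

section
/- The multiplicative semigroup of positive rationals generated by 2 together with the fractions (2k+1)/(3k+2) for all integers k ≥ 0 equals the set of all positive rationals a/b in lowest terms with b not divisible by 3. -/
/-- The generating set of the 3x+1 semigroup: 2 together with (2k+1)/(3k+2) for k ≥ 0. -/
def collatzGens : Set ℚ := {2} ∪ {q : ℚ | ∃ k : ℕ, q = (2 * k + 1) / (3 * k + 2)}

/-- The 3x+1 semigroup `S`. -/
def collatzSemigroup : Subsemigroup ℚ := Subsemigroup.closure collatzGens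

/-!
Write `T` for the `3x+1` map. The generators are `2` and the quotients `y / T y` with `y` odd, so
`n ∈ S` as soon as some iterate of `T` takes `n` into `S`. If moreover `1 / q ∈ S`, then it is
enough that some iterate takes `q * n` into `S`, and a well-chosen `q` makes this iterate smaller
than `n`.

The heart of the proof is an induction showing `1 / n ∈ S` for every `n` prime to `3`. Suppose this
is known below `n`, with `n` prime to `6`.
* Every positive integer less than `2 * n ^ 2` lies in `S`. Outside the class of `-1` modulo `2 ^ 7`
  a few multipliers `q < 44` make `q * n` descend. For `n + 1 = 2 ^ j * m` the multiplier
  `q = (2 ^ j + 1) / 3` gives `T (q * n) = 2 ^ (j - 1) * (n + m)`, which trades `n` for the barely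
  larger number `n + m` and lowers the power of `2` dividing `n + 1`; two such trades lead out of
  the class of `-1`.
* There are `v`, `w` below `n` and prime to `3` such that `y = v * w ^ 2` satisfies `T y = n * q`
  with `q < 2 * n ^ 2`, and then `1 / n = (1 / y) * (y / T y) * q` lies in `S`.
-/

theorem two_mem_collatzSemigroup : 2 ∈ collatzSemigroup :=
  Subsemigroup.subset_closure (Or.inl rfl)

theorem div_mem_collatzSemigroup {y t : ℕ} (h : 2 * t = 3 * y + 1) :
    (y / t : ℚ) ∈ collatzSemigroup := by
  obtain ⟨k, rfl⟩ : ∃ k, y = 2 * k + 1 := ⟨y / 2, by omega⟩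
  obtain rfl : t = 3 * k + 2 := by omega
  exact Subsemigroup.subset_closure (Or.inr ⟨k, by push_cast; rfl⟩)

theorem one_half_mem_collatzSemigroup : (2 : ℚ)⁻¹ ∈ collatzSemigroup := by
  simpa using div_mem_collatzSemigroup (y := 1) (t := 2) rfl

theorem one_mem_collatzSemigroup : 1 ∈ collatzSemigroup := by
  simpa using mul_mem two_mem_collatzSemigroup one_half_mem_collatzSemigroup

theorem pow_mem_collatzSemigroup {x : ℚ} (hx : x ∈ collatzSemigroup) (k : ℕ) :
    x ^ k ∈ collatzSemigroup := by
  induction k with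
  | zero => simpa using one_mem_collatzSemigroup
  | succ k ih =>
    rw [pow_succ]
    exact mul_mem ih hx

theorem pos_of_mem_collatzSemigroup {x : ℚ} (hx : x ∈ collatzSemigroup) : 0 < x := by
  induction hx using Subsemigroup.closure_induction with
  | mem x hx => rcases hx with rfl | ⟨k, rfl⟩ <;> positivity
  | mul x y _ _ hx hy => exact mul_pos hx hy

theorem not_three_dvd_den_of_mem_collatzSemigroup {x : ℚ} (hx : x ∈ collatzSemigroup) :
    ¬ 3 ∣ x.den := by
  induction hx using Subsemigroup.closure_induction with
  | mem x hx =>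
    rcases hx with rfl | ⟨k, rfl⟩
    · norm_num
    · intro h
      have hden : ((2 * k + 1 : ℚ) / (3 * k + 2)).den ∣ 3 * k + 2 := by
        have := Rat.den_dvd (2 * k + 1 : ℤ) (3 * k + 2 : ℤ)
        rw [Rat.divInt_eq_div] at this
        push_cast at this
        exact_mod_cast this
      have := h.trans hden
      omega
  | mul x y _ _ hx hy =>
    exact fun h ↦ (Nat.prime_three.dvd_mul.1 (h.trans (Rat.mul_den_dvd x y))).elim hx hy

/-- The positive integers that lie in the `3x+1` semigroup. -/
def collatzIntegers : Submonoid ℕ where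
  carrier := {n | (n : ℚ) ∈ collatzSemigroup}
  one_mem' := by simpa using one_mem_collatzSemigroup
  mul_mem' ha hb := by simpa using mul_mem ha hb

/-- The wild integers of Applegate and Lagarias: the positive integers whose inverse lies in the
`3x+1` semigroup. Zero is not wild, since `0⁻¹ = 0` is not in the semigroup. -/
def wildIntegers : Submonoid ℕ where
  carrier := {n | (n : ℚ)⁻¹ ∈ collatzSemigroup}
  one_mem' := by simpa using one_mem_collatzSemigroup
  mul_mem' ha hb := by simpa [mul_comm] using mul_mem ha hb

theorem mem_collatzIntegers {n : ℕ} : n ∈ collatzIntegers ↔ (n : ℚ) ∈ collatzSemigroup :=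
  Iff.rfl

theorem mem_wildIntegers {n : ℕ} : n ∈ wildIntegers ↔ (n : ℚ)⁻¹ ∈ collatzSemigroup :=
  Iff.rfl

theorem two_mem_collatzIntegers : 2 ∈ collatzIntegers := two_mem_collatzSemigroup

theorem two_mem_wildIntegers : 2 ∈ wildIntegers := one_half_mem_collatzSemigroup

theorem pos_of_mem_wildIntegers {n : ℕ} (hn : n ∈ wildIntegers) : 0 < n := by
  simpa using pos_of_mem_collatzSemigroup hn

theorem mem_collatzIntegers_of_mul_mem {q n : ℕ} (hq : q ∈ wildIntegers)
    (h : q * n ∈ collatzIntegers) : n ∈ collatzIntegers := by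
  have hq0 : (q : ℚ) ≠ 0 := by exact_mod_cast (pos_of_mem_wildIntegers hq).ne'
  have := mul_mem (mem_wildIntegers.1 hq) (mem_collatzIntegers.1 h)
  rwa [Nat.cast_mul, inv_mul_cancel_left₀ hq0] at this

theorem mem_collatzIntegers_of_two_mul_eq {y t : ℕ} (h : 2 * t = 3 * y + 1)
    (ht : t ∈ collatzIntegers) : y ∈ collatzIntegers := by
  have ht0 : (t : ℚ) ≠ 0 := by exact_mod_cast (by omega : t ≠ 0)
  have := mul_mem (div_mem_collatzSemigroup h) (mem_collatzIntegers.1 ht)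
  rwa [div_mul_cancel₀ _ ht0] at this

theorem mem_wildIntegers_of_two_mul_mul_eq {y n q : ℕ} (h : 2 * (n * q) = 3 * y + 1)
    (hy : y ∈ wildIntegers) (hq : q ∈ collatzIntegers) : n ∈ wildIntegers := by
  have hy0 : (y : ℚ) ≠ 0 := by exact_mod_cast (pos_of_mem_wildIntegers hy).ne'
  have hq0 : (q : ℚ) ≠ 0 := by exact_mod_cast (by rintro rfl; omega : q ≠ 0)
  have hn0 : (n : ℚ) ≠ 0 := by exact_mod_cast (by rintro rfl; omega : n ≠ 0)
  have hinv : (y : ℚ)⁻¹ * (y / (n * q : ℕ)) * q = (n : ℚ)⁻¹ := by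
    push_cast
    field_simp
  rw [mem_wildIntegers, ← hinv]
  exact mul_mem (mul_mem hy (div_mem_collatzSemigroup h)) hq

/-- The `3x+1` map, in the form that halves `3 * n + 1` at once when `n` is odd. -/
def collatzStep (n : ℕ) : ℕ := if Even n then n / 2 else (3 * n + 1) / 2

theorem two_mul_collatzStep_of_even {n : ℕ} (hn : Even n) : 2 * collatzStep n = n := by
  rw [collatzStep, if_pos hn, Nat.two_mul_div_two_of_even hn]

theorem two_mul_collatzStep_of_odd {n : ℕ} (hn : Odd n) : 2 * collatzStep n = 3 * n + 1 := by
  have := Nat.odd_iff.1 hn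
  rw [collatzStep, if_neg (Nat.not_even_iff_odd.2 hn)]
  omega

theorem collatzStep_pos {n : ℕ} (hn : 0 < n) : 0 < collatzStep n := by
  rcases n.even_or_odd with h | h
  · have := two_mul_collatzStep_of_even h
    omega
  · have := two_mul_collatzStep_of_odd h
    omega

theorem iterate_collatzStep_pos {n : ℕ} (hn : 0 < n) (k : ℕ) : 0 < collatzStep^[k] n := by
  induction k with
  | zero => exact hn
  | succ k ih =>
    rw [Function.iterate_succ_apply']
    exact collatzStep_pos ih

theorem mem_collatzIntegers_of_collatzStep_mem {n : ℕ} (h : collatzStep n ∈ collatzIntegers) :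
    n ∈ collatzIntegers := by
  rcases n.even_or_odd with hn | hn
  · rw [← two_mul_collatzStep_of_even hn]
    exact mul_mem two_mem_collatzIntegers h
  · exact mem_collatzIntegers_of_two_mul_eq (two_mul_collatzStep_of_odd hn) h

theorem mem_collatzIntegers_of_iterate_mem {n k : ℕ} (h : collatzStep^[k] n ∈ collatzIntegers) :
    n ∈ collatzIntegers := by
  induction k with
  | zero => exact h
  | succ k ih =>
    rw [Function.iterate_succ_apply'] at h
    exact ih (mem_collatzIntegers_of_collatzStep_mem h)

theorem mem_collatzIntegers_of_iterate_eq_one {n k : ℕ} (h : collatzStep^[k] n = 1) :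
    n ∈ collatzIntegers :=
  mem_collatzIntegers_of_iterate_mem (h ▸ one_mem _)

/-- The number of odd terms among the first `k` terms of the `3x+1` trajectory of `n`. -/
def collatzOddSteps : ℕ → ℕ → ℕ
  | 0, _ => 0
  | k + 1, n => n % 2 + collatzOddSteps k (collatzStep n)

-- The parities of the first `k` terms of a trajectory depend only on its start modulo `2 ^ k`.
theorem iterate_collatzStep_two_pow_mul_add (k r c : ℕ) :
    collatzStep^[k] (2 ^ k * r + c) = 3 ^ collatzOddSteps k c * r + collatzStep^[k] c := by
  induction k generalizing r c with
  | zero => simp [collatzOddSteps]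
  | succ k ih =>
    have hstart : 2 ^ (k + 1) * r + c = 2 * (2 ^ k * r) + c := by ring
    have heven : Even (2 * (2 ^ k * r)) := even_two_mul _
    rw [Function.iterate_succ_apply, Function.iterate_succ_apply, collatzOddSteps, hstart]
    rcases c.even_or_odd with hc | hc
    · have hstep : collatzStep (2 * (2 ^ k * r) + c) = 2 ^ k * r + collatzStep c := by
        have := two_mul_collatzStep_of_even hc
        have := two_mul_collatzStep_of_even (heven.add hc)
        omega
      rw [hstep, ih, Nat.even_iff.1 hc, zero_add]
    · have hstep : collatzStep (2 * (2 ^ k * r) + c) = 2 ^ k * (3 * r) + collatzStep c := by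
        have := two_mul_collatzStep_of_odd hc
        have := two_mul_collatzStep_of_odd (heven.add_odd hc)
        have : 2 ^ k * (3 * r) = 3 * (2 ^ k * r) := by ring
        omega
      rw [hstep, ih, Nat.odd_iff.1 hc]
      ring

/-- The multiplier `q` makes the residue class of `c` modulo `2 ^ k` descend: `k` steps of the
`3x+1` map take `q * (2 ^ k * r + c)` to a linear function of `r` whose coefficients are at most
`31 / 32` times those of `2 ^ k * r + c`. -/
def CollatzContracts (k q c : ℕ) : Prop :=
  32 * (3 ^ collatzOddSteps k (q * c) * q) ≤ 31 * 2 ^ k ∧ 32 * collatzStep^[k] (q * c) ≤ 31 * c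

instance (k q c : ℕ) : Decidable (CollatzContracts k q c) := inferInstanceAs (Decidable (_ ∧ _))

theorem CollatzContracts.iterate_collatzStep_le {k q c : ℕ} (h : CollatzContracts k q c) (r : ℕ) :
    32 * collatzStep^[k] (q * (2 ^ k * r + c)) ≤ 31 * (2 ^ k * r + c) := by
  have hstart : q * (2 ^ k * r + c) = 2 ^ k * (q * r) + q * c := by ring
  calc 32 * collatzStep^[k] (q * (2 ^ k * r + c))
      = 32 * (3 ^ collatzOddSteps k (q * c) * q) * r + 32 * collatzStep^[k] (q * c) := by
        rw [hstart, iterate_collatzStep_two_pow_mul_add]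
        ring
    _ ≤ 31 * 2 ^ k * r + 31 * c := Nat.add_le_add (Nat.mul_le_mul_right r h.1) h.2
    _ = 31 * (2 ^ k * r + c) := by ring

-- Residues are represented from `2` on because `1`, being periodic, does not descend.
theorem exists_contracts_mod {m : ℕ} (hm : m < 2 ^ 11) (h : ¬ 2 ^ 7 ∣ m + 3) :
    ∃ k ≤ 11, ∃ q < 44, ¬ 3 ∣ q ∧ CollatzContracts k q (m % 2 ^ k + 2) := by
  have hcover : ∀ m < 2 ^ 11, ¬ 2 ^ 7 ∣ m + 3 →
      ∃ e ∈ [(8, 8), (10, 4), (11, 5), (10, 35), (10, 1), (8, 22), (10, 31), (7, 13), (11, 17),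
        (8, 23), (11, 19)],
      e.1 ≤ 11 ∧ e.2 < 44 ∧ ¬ 3 ∣ e.2 ∧ CollatzContracts e.1 e.2 (m % 2 ^ e.1 + 2) := by
    decide +kernel
  obtain ⟨⟨k, q⟩, -, hk, hq, hq3, hc⟩ := hcover m hm h
  exact ⟨k, hk, q, hq, hq3, hc⟩

theorem exists_contracts {n : ℕ} (h1 : 1 < n) (h : ¬ 2 ^ 7 ∣ n + 1) :
    ∃ k r c q, n = 2 ^ k * r + c ∧ q < 44 ∧ ¬ 3 ∣ q ∧ CollatzContracts k q c := by
  obtain ⟨k, hk, q, hq, hq3, hc⟩ := exists_contracts_mod (m := (n - 2) % 2 ^ 11)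
    (Nat.mod_lt _ (by norm_num)) (by omega)
  rw [Nat.mod_mod_of_dvd _ (pow_dvd_pow 2 hk)] at hc
  refine ⟨k, (n - 2) / 2 ^ k, _, q, ?_, hq, hq3, hc⟩
  have := Nat.div_add_mod (n - 2) (2 ^ k)
  omega

theorem exists_descent (hwild : ∀ q < 44, ¬ 3 ∣ q → q ∈ wildIntegers) {n : ℕ} (h1 : 1 < n)
    (h : ¬ 2 ^ 7 ∣ n + 1) :
    ∃ x, 0 < x ∧ 32 * x ≤ 31 * n ∧ (x ∈ collatzIntegers → n ∈ collatzIntegers) := by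
  obtain ⟨k, r, c, q, rfl, hq, hq3, hc⟩ := exists_contracts h1 h
  refine ⟨_, iterate_collatzStep_pos (Nat.mul_pos (by omega) (by omega)) k,
    hc.iterate_collatzStep_le r, fun hx ↦ ?_⟩
  exact mem_collatzIntegers_of_mul_mem (hwild q hq hq3) (mem_collatzIntegers_of_iterate_mem hx)

theorem mem_collatzIntegers_of_add_mem {j q n m : ℕ} (hj : j ≠ 0) (hq : 3 * q = 2 ^ j + 1)
    (hwild : q ∈ wildIntegers) (hn : n + 1 = 2 ^ j * m) (h : n + m ∈ collatzIntegers) :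
    n ∈ collatzIntegers := by
  obtain ⟨i, rfl⟩ := Nat.exists_eq_succ_of_ne_zero hj
  refine mem_collatzIntegers_of_mul_mem hwild <| mem_collatzIntegers_of_two_mul_eq ?_ <|
    mul_mem (pow_mem two_mem_collatzIntegers i) h
  rw [pow_succ] at hq hn
  linear_combination -hn - n * hq

theorem exists_three_mul_eq_two_pow_add_one {j : ℕ} (hj : j % 6 = 1 ∨ j % 6 = 5) :
    ∃ q, 3 * q = 2 ^ j + 1 ∧ ¬ 3 ∣ q := by
  have hmod : 2 ^ j % 9 = 2 ∨ 2 ^ j % 9 = 5 := by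
    rw [← Nat.div_add_mod j 6, pow_add, pow_mul, Nat.mul_mod, Nat.pow_mod]
    rcases hj with hj | hj <;> simp [hj]
  exact ⟨(2 ^ j + 1) / 3, by omega, by omega⟩

theorem exists_le_mod_six_eq_one_or_five {M : ℕ} (hM : 7 ≤ M) :
    ∃ j, 7 ≤ j ∧ j ≤ M ∧ M ≤ j + 3 ∧ (j % 6 = 1 ∨ j % 6 = 5) := by
  by_cases h0 : M % 6 = 1 ∨ M % 6 = 5
  · exact ⟨M, by omega⟩
  by_cases h1 : M % 6 = 0 ∨ M % 6 = 2
  · exact ⟨M - 1, by omega⟩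
  by_cases h2 : M % 6 = 3
  · exact ⟨M - 2, by omega⟩
  · exact ⟨M - 3, by omega⟩

theorem le_of_two_pow_dvd_two_pow_mul_odd {a b m : ℕ} (hm : Odd m) (h : 2 ^ b ∣ 2 ^ a * m) :
    b ≤ a :=
  (Nat.pow_dvd_pow_iff_le_right (by norm_num)).1
    ((Nat.Coprime.pow_left b (Nat.coprime_two_left.2 hm)).dvd_of_dvd_mul_right h)

section

variable {p L : ℕ}

-- One trade `n ↦ n + m`. Taking `j ≥ 7` keeps the growth factor `1 + 2⁻ʲ` below `129 / 128`.
theorem exists_not_two_pow_dvd_add_one (hL : 7 ≤ L) (hLp : 2 ^ L + 1 < 3 * p)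
    (hwild : ∀ q < p, ¬ 3 ∣ q → q ∈ wildIntegers) {b c n : ℕ} (hb : 7 ≤ b) (hc : c + 3 ≤ b + L)
    (hn : ¬ 2 ^ c ∣ n + 1) :
    ∃ x, n ≤ x ∧ 128 * (x + 1) ≤ 129 * (n + 1) ∧ ¬ 2 ^ b ∣ x + 1 ∧
      (x ∈ collatzIntegers → n ∈ collatzIntegers) := by
  by_cases hbn : 2 ^ b ∣ n + 1
  swap
  · exact ⟨n, le_rfl, by omega, hbn, id⟩
  obtain ⟨a, m, hm, hnm⟩ := Nat.exists_eq_two_pow_mul_odd (n := n + 1) (by omega)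
  have hba : b ≤ a := le_of_two_pow_dvd_two_pow_mul_odd hm (hnm ▸ hbn)
  have hac : a < c := by
    by_contra! hca
    exact hn (hnm ▸ (pow_dvd_pow 2 hca).mul_right m)
  obtain ⟨j, hj7, hjM, hMj, hj⟩ := exists_le_mod_six_eq_one_or_five (M := min a L) (by omega)
  obtain ⟨q, hq, hq3⟩ := exists_three_mul_eq_two_pow_add_one hj
  have hqp : q < p := by
    have : 2 ^ j ≤ 2 ^ L := Nat.pow_le_pow_right two_pos (by omega)
    omega
  have hnj : n + 1 = 2 ^ j * (2 ^ (a - j) * m) := by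
    rw [hnm, ← mul_assoc, ← pow_add, Nat.add_sub_cancel' (by omega)]
  refine ⟨n + 2 ^ (a - j) * m, by omega, ?_, fun hdvd ↦ ?_,
    mem_collatzIntegers_of_add_mem (by omega) hq (hwild q hqp hq3) hnj⟩
  · have : 2 ^ 7 * (2 ^ (a - j) * m) ≤ n + 1 :=
      hnj ▸ Nat.mul_le_mul_right _ (Nat.pow_le_pow_right two_pos hj7)
    omega
  · have hodd : Odd (2 ^ j + 1) := (Nat.even_pow.2 ⟨even_two, by omega⟩).add_one
    have hx : n + 2 ^ (a - j) * m + 1 = 2 ^ (a - j) * ((2 ^ j + 1) * m) := by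
      rw [add_right_comm, hnj]
      ring
    have := le_of_two_pow_dvd_two_pow_mul_odd (hodd.mul hm) (hx ▸ hdvd)
    omega

theorem exists_lt_of_lt_two_pow (hL : 7 ≤ L) (hLp : 2 ^ L + 1 < 3 * p)
    (hwild : ∀ q < p, ¬ 3 ∣ q → q ∈ wildIntegers) {n : ℕ} (h1 : 1 < n)
    (hn : n + 1 < 2 ^ (2 * L + 1)) :
    ∃ x, 0 < x ∧ x < n ∧ (x ∈ collatzIntegers → n ∈ collatzIntegers) := by
  have hp : 44 ≤ p := by
    have : 2 ^ 7 ≤ 2 ^ L := Nat.pow_le_pow_right two_pos hL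
    omega
  obtain ⟨y, hny, hyn, hy, hyS⟩ := exists_not_two_pow_dvd_add_one hL hLp hwild (b := L + 4)
    (by omega) (by omega) (Nat.not_dvd_of_pos_of_lt n.succ_pos hn)
  obtain ⟨z, hyz, hzy, hz, hzS⟩ := exists_not_two_pow_dvd_add_one hL hLp hwild (b := 7)
    (by omega) (by omega) hy
  obtain ⟨x, hx0, hxz, hxS⟩ :=
    exists_descent (fun q hq ↦ hwild q (hq.trans_le hp)) (by omega) hz
  -- `(31 / 32) * (129 / 128) ^ 2 < 1`
  exact ⟨x, hx0, by omega, fun hx ↦ hyS (hzS (hxS hx))⟩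

theorem mem_collatzIntegers_of_lt_two_pow (hL : 7 ≤ L) (hLp : 2 ^ L + 1 < 3 * p)
    (hwild : ∀ q < p, ¬ 3 ∣ q → q ∈ wildIntegers) {n : ℕ} (h0 : 0 < n)
    (hn : n + 1 < 2 ^ (2 * L + 1)) : n ∈ collatzIntegers := by
  induction n using Nat.strong_induction_on with
  | _ n ih =>
    obtain rfl | h1 : n = 1 ∨ 1 < n := by omega
    · exact one_mem _
    · obtain ⟨x, hx0, hxn, hxS⟩ := exists_lt_of_lt_two_pow hL hLp hwild h1 hn
      exact hxS (ih x hxn hx0 (by omega))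

theorem mem_collatzIntegers_of_lt_two_mul_sq (hp : 44 ≤ p)
    (hwild : ∀ q < p, ¬ 3 ∣ q → q ∈ wildIntegers) {n : ℕ} (h0 : 0 < n) (hn : n < 2 * p ^ 2) :
    n ∈ collatzIntegers := by
  have hL : 7 ≤ Nat.log 2 (3 * p - 2) := Nat.le_log_of_pow_le (by norm_num) (by omega)
  have hle : 2 ^ Nat.log 2 (3 * p - 2) ≤ 3 * p - 2 := Nat.pow_log_le_self 2 (by omega)
  have hlt : 3 * p - 2 < 2 ^ (Nat.log 2 (3 * p - 2) + 1) :=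
    Nat.lt_pow_succ_log_self (by norm_num) _
  refine mem_collatzIntegers_of_lt_two_pow hL (by omega) hwild h0 ?_
  have hpL : p < 2 ^ Nat.log 2 (3 * p - 2) := by
    rw [pow_succ] at hlt
    omega
  calc n + 1 ≤ 2 * p ^ 2 := hn
    _ < 2 * (2 ^ Nat.log 2 (3 * p - 2)) ^ 2 := by gcongr
    _ = 2 ^ (2 * Nat.log 2 (3 * p - 2) + 1) := by ring

end

theorem five_mem_wildIntegers : 5 ∈ wildIntegers := by
  have hfactor : ((5 : ℕ) : ℚ)⁻¹ = 2 ^ 7 * (7 / 11) ^ 4 * (11 / 17) ^ 4 * (17 / 26) ^ 3 *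
      (65 / 98) ^ 3 * (833 / 1250) := by norm_num
  have h7 : (7 / 11 : ℚ) ∈ collatzSemigroup := div_mem_collatzSemigroup (y := 7) (t := 11) rfl
  have h11 : (11 / 17 : ℚ) ∈ collatzSemigroup := div_mem_collatzSemigroup (y := 11) (t := 17) rfl
  have h17 : (17 / 26 : ℚ) ∈ collatzSemigroup := div_mem_collatzSemigroup (y := 17) (t := 26) rfl
  have h65 : (65 / 98 : ℚ) ∈ collatzSemigroup := div_mem_collatzSemigroup (y := 65) (t := 98) rfl
  have h833 : (833 / 1250 : ℚ) ∈ collatzSemigroup :=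
    div_mem_collatzSemigroup (y := 833) (t := 1250) rfl
  rw [mem_wildIntegers, hfactor]
  exact mul_mem (mul_mem (mul_mem (mul_mem (mul_mem
    (pow_mem_collatzSemigroup two_mem_collatzSemigroup 7) (pow_mem_collatzSemigroup h7 4))
    (pow_mem_collatzSemigroup h11 4)) (pow_mem_collatzSemigroup h17 3))
    (pow_mem_collatzSemigroup h65 3)) h833

theorem mem_wildIntegers_of_coprime_six_of_lt {n : ℕ} (hn : n < 49) (h2 : ¬ 2 ∣ n) (h3 : ¬ 3 ∣ n) :
    n ∈ wildIntegers := by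
  have s5 : 5 ∈ collatzIntegers := mem_collatzIntegers_of_iterate_eq_one (k := 4) (by decide)
  have s14 : 14 ∈ collatzIntegers := mem_collatzIntegers_of_iterate_eq_one (k := 12) (by decide)
  have s16 : 16 ∈ collatzIntegers := mem_collatzIntegers_of_iterate_eq_one (k := 4) (by decide)
  have s134 : 134 ∈ collatzIntegers :=
    mem_collatzIntegers_of_iterate_eq_one (k := 20) (by decide)
  have h1 := one_mem wildIntegers
  have h5 := five_mem_wildIntegers
  have h25 : 25 ∈ wildIntegers := mul_mem h5 h5
  have h7 : 7 ∈ wildIntegers :=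
    mem_wildIntegers_of_two_mul_mul_eq (y := 25 * 25) rfl (mul_mem h25 h25) s134
  have h35 : 35 ∈ wildIntegers := mul_mem h5 h7
  have h11 : 11 ∈ wildIntegers := mem_wildIntegers_of_two_mul_mul_eq rfl h7 (one_mem _)
  have h13 : 13 ∈ wildIntegers :=
    mem_wildIntegers_of_two_mul_mul_eq (y := 11 * 11) rfl (mul_mem h11 h11) s14
  have h17 : 17 ∈ wildIntegers := mem_wildIntegers_of_two_mul_mul_eq rfl h11 (one_mem _)
  have h19 : 19 ∈ wildIntegers :=
    mem_wildIntegers_of_two_mul_mul_eq rfl h25 two_mem_collatzIntegers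
  have h23 : 23 ∈ wildIntegers :=
    mem_wildIntegers_of_two_mul_mul_eq (y := 7 * 35) rfl (mul_mem h7 h35) s16
  have h29 : 29 ∈ wildIntegers := mem_wildIntegers_of_two_mul_mul_eq rfl h19 (one_mem _)
  have h31 : 31 ∈ wildIntegers :=
    mem_wildIntegers_of_two_mul_mul_eq (y := 17 * 17) rfl (mul_mem h17 h17) s14
  have h37 : 37 ∈ wildIntegers :=
    mem_wildIntegers_of_two_mul_mul_eq (y := 7 * 7) rfl (mul_mem h7 h7) two_mem_collatzIntegers
  have h41 : 41 ∈ wildIntegers :=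
    mem_wildIntegers_of_two_mul_mul_eq (y := 19 * 23) rfl (mul_mem h19 h23) s16
  have h43 : 43 ∈ wildIntegers :=
    mem_wildIntegers_of_two_mul_mul_eq (y := 11 * 13) rfl (mul_mem h11 h13) s5
  have h47 : 47 ∈ wildIntegers := mem_wildIntegers_of_two_mul_mul_eq rfl h31 (one_mem _)
  interval_cases n <;> first | assumption | omega

-- For `m` prime to `p`, the representatives below `p` of `1 / m` and `-1 / m` modulo `p` add up to
-- `p`, so one of them is odd. For `m = 6` and `m = 12` the odd ones are not both multiples of `3`;
-- this depends only on `p` modulo `72`.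
theorem exists_lt_coprime_six_dvd_sq_sub_one {p : ℕ} (h1 : 1 < p) (h2 : ¬ 2 ∣ p) (h3 : ¬ 3 ∣ p) :
    ∃ w < p, ¬ 2 ∣ w ∧ ¬ 3 ∣ w ∧ ∃ m : ℤ, (m = 6 ∨ m = 12) ∧ (p : ℤ) ∣ (m * w) ^ 2 - 1 := by
  obtain ⟨w, k, hwp, hw2, hw3, hw⟩ : ∃ w k : ℕ, w < p ∧ ¬ 2 ∣ w ∧ ¬ 3 ∣ w ∧
      (6 * w = k * p + 1 ∨ 6 * w + 1 = k * p ∨ 12 * w = k * p + 1 ∨ 12 * w + 1 = k * p) := by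
    obtain ⟨t, r, hr, hp⟩ : ∃ t r, r < 72 ∧ p = 72 * t + r :=
      ⟨p / 72, p % 72, Nat.mod_lt _ (by norm_num), by omega⟩
    interval_cases r <;> first
      | omega
      | exact ⟨(p + 1) / 6, 1, by omega⟩
      | exact ⟨(p - 1) / 6, 1, by omega⟩
      | exact ⟨(5 * p + 1) / 6, 5, by omega⟩
      | exact ⟨(5 * p - 1) / 6, 5, by omega⟩
      | exact ⟨(p + 1) / 12, 1, by omega⟩
      | exact ⟨(p - 1) / 12, 1, by omega⟩
      | exact ⟨(5 * p + 1) / 12, 5, by omega⟩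
      | exact ⟨(5 * p - 1) / 12, 5, by omega⟩
      | exact ⟨(7 * p + 1) / 12, 7, by omega⟩
      | exact ⟨(7 * p - 1) / 12, 7, by omega⟩
      | exact ⟨(11 * p + 1) / 12, 11, by omega⟩
  refine ⟨w, hwp, hw2, hw3, ?_⟩
  rcases hw with hw | hw | hw | hw <;> zify at hw
  · exact ⟨6, by simp, k * (6 * w + 1), by linear_combination (6 * w + 1 : ℤ) * hw⟩
  · exact ⟨6, by simp, k * (6 * w - 1), by linear_combination (6 * w - 1 : ℤ) * hw⟩
  · exact ⟨12, by simp, k * (12 * w + 1), by linear_combination (12 * w + 1 : ℤ) * hw⟩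
  · exact ⟨12, by simp, k * (12 * w - 1), by linear_combination (12 * w - 1 : ℤ) * hw⟩

-- With `w ≡ ±1 / m` modulo `p` and `v = p - m ^ 2 / 3`, indeed `3 * v * w ^ 2 ≡ -1`.
theorem exists_two_mul_mul_eq {p : ℕ} (hp : 48 < p) (h2 : ¬ 2 ∣ p) (h3 : ¬ 3 ∣ p) :
    ∃ v w q : ℕ, v < p ∧ ¬ 3 ∣ v ∧ w < p ∧ ¬ 3 ∣ w ∧ 2 * (p * q) = 3 * (v * w ^ 2) + 1 := by
  obtain ⟨w, hwp, hw2, hw3, m, hm, hdvd⟩ :=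
    exists_lt_coprime_six_dvd_sq_sub_one (by omega) h2 h3
  obtain ⟨c, hc, hcm⟩ : ∃ c : ℕ, (c = 12 ∨ c = 48) ∧ 3 * (c : ℤ) = m ^ 2 := by
    rcases hm with rfl | rfl
    · exact ⟨12, by norm_num⟩
    · exact ⟨48, by norm_num⟩
  have hpdvd : p ∣ 3 * ((p - c) * w ^ 2) + 1 := by
    zify [show c ≤ p by omega]
    obtain ⟨d, hd⟩ := hdvd
    exact ⟨3 * w ^ 2 - d, by linear_combination -hd - w ^ 2 * hcm⟩
  have h2dvd : 2 ∣ 3 * ((p - c) * w ^ 2) + 1 := by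
    have hv : Odd (p - c) := Nat.odd_iff.2 (by omega)
    have hw : Odd w := Nat.odd_iff.2 (by omega)
    have := Nat.odd_iff.1 (hv.mul hw.pow : Odd ((p - c) * w ^ 2))
    omega
  have hcop : Nat.Coprime 2 p := (Nat.Prime.coprime_iff_not_dvd Nat.prime_two).2 h2
  obtain ⟨q, hq⟩ := hcop.mul_dvd_of_dvd_of_dvd h2dvd hpdvd
  exact ⟨p - c, w, q, by omega, by omega, hwp, hw3, by rw [hq, mul_assoc]⟩

theorem mem_wildIntegers_of_not_three_dvd {n : ℕ} (h3 : ¬ 3 ∣ n) : n ∈ wildIntegers := by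
  induction n using Nat.strong_induction_on with
  | _ n ih =>
    by_cases h2 : 2 ∣ n
    · obtain ⟨m, rfl⟩ := h2
      exact mul_mem two_mem_wildIntegers (ih m (by omega) (by omega))
    rcases Nat.lt_or_ge n 49 with hlt | hge
    · exact mem_wildIntegers_of_coprime_six_of_lt hlt h2 h3
    obtain ⟨v, w, q, hv, hv3, hw, hw3, hq⟩ := exists_two_mul_mul_eq hge h2 h3
    have hq0 : 0 < q := Nat.pos_of_ne_zero (by rintro rfl; omega)
    have hqn : q < 2 * n ^ 2 := by
      have hvw : v * w ^ 2 < n * n ^ 2 := by gcongr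
      refine Nat.lt_of_mul_lt_mul_left (a := n) ?_
      rw [mul_left_comm]
      omega
    exact mem_wildIntegers_of_two_mul_mul_eq hq (mul_mem (ih v hv hv3) (pow_mem (ih w hw hw3) 2))
      (mem_collatzIntegers_of_lt_two_mul_sq (by omega) ih hq0 hqn)

theorem mem_collatzIntegers_of_pos {n : ℕ} (h0 : 0 < n) : n ∈ collatzIntegers :=
  mem_collatzIntegers_of_lt_two_mul_sq (p := n + 44) (by omega)
    (fun _ _ ↦ mem_wildIntegers_of_not_three_dvd) h0 (by nlinarith)

theorem collatz_semigroup_eq :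
    (collatzSemigroup : Set ℚ) = {q : ℚ | 0 < q ∧ ¬ (3 ∣ q.den)} := by
  ext x
  constructor
  · exact fun hx ↦ ⟨pos_of_mem_collatzSemigroup hx, not_three_dvd_den_of_mem_collatzSemigroup hx⟩
  · rintro ⟨h0, h3⟩
    obtain ⟨n, hn⟩ := Int.eq_ofNat_of_zero_le (Rat.num_pos.2 h0).le
    have hnum : n ∈ collatzIntegers :=
      mem_collatzIntegers_of_pos (by have := Rat.num_pos.2 h0; omega)
    have hden : x.den ∈ wildIntegers := mem_wildIntegers_of_not_three_dvd h3
    have hx : (n : ℚ) * (x.den : ℚ)⁻¹ = x := by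
      rw [← div_eq_mul_inv, ← Int.cast_natCast n, ← hn, Rat.num_div_den]
    exact hx ▸ mul_mem (mem_collatzIntegers.1 hnum) (mem_wildIntegers.1 hden)
end

section
/- Every positive integer belongs to the 3x+1 semigroup S. -/
/-!
A generator `m / a` with `3 * m + 1 = 2 * a` lets membership in `S` pass from `a` to `m`, and
membership of inverses from `m⁻¹` to `a⁻¹`. Neither the Collatz step nor its reverse always gets
smaller, so both are applied to a product `x * y` in place of `m`: if all but one of the factors of
`x * y` and of `3 * (x * y) + 1` are understood, so is the last one.

Suppose that `m⁻¹ ∈ S` for all `m < n` prime to `3`. Then every positive `N ≤ 16 * n / 9` lies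
in `S`: at most three Collatz steps, applied to `N` or to `5 * N`, reduce it, up to powers of two,
to something smaller or to some `3 * c ± 2` with `c < n`; in the latter case
`3 * (c * (3 * c ± 2)) + 1 = (3 * c ± 1) ^ 2`, and `3 * c ± 1` is twice a number smaller than `N`.
The bound is the one that makes the largest `c` that occurs, `(9 * N - 7) / 16`, smaller than `n`.
In turn `n⁻¹ ∈ S` if `n` is odd and prime to `3`: apart from a few small `n`, either one or two
Collatz steps lead from some `m < n` to `n`, up to powers of two and a common factor `5`, or there
are `x` and `y`, depending on the residue of `n` modulo `216`, with
`3 * (x * y) + 1 = 2 * (s * n)` and `s ≤ 16 * n / 9`.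
-/

namespace collatzSemigroup

theorem pos_of_mem {q : ℚ} (hq : q ∈ collatzSemigroup) : 0 < q := by
  induction hq using Subsemigroup.closure_induction with
  | mem q hq =>
    rcases hq with rfl | ⟨k, rfl⟩
    · exact two_pos
    · positivity
  | mul p q _ _ hp hq => exact mul_pos hp hq

theorem two_mem : (2 : ℚ) ∈ collatzSemigroup :=
  Subsemigroup.subset_closure (Or.inl rfl)

theorem div_mem_of_three_mul_add_one_eq {m a : ℕ} (h : 3 * m + 1 = 2 * a) :
    (m : ℚ) / a ∈ collatzSemigroup := by
  obtain ⟨k, rfl⟩ : ∃ k, m = 2 * k + 1 := ⟨m / 2, by omega⟩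
  obtain rfl : a = 3 * k + 2 := by omega
  exact Subsemigroup.subset_closure (Or.inr ⟨k, by push_cast; rfl⟩)

theorem inv_two_mem : (2 : ℚ)⁻¹ ∈ collatzSemigroup := by
  simpa using div_mem_of_three_mul_add_one_eq (m := 1) (a := 2) rfl

theorem one_mem : (1 : ℚ) ∈ collatzSemigroup := by
  simpa using mul_mem two_mem inv_two_mem

theorem two_mul_mem {a : ℕ} (ha : (a : ℚ) ∈ collatzSemigroup) :
    ((2 * a : ℕ) : ℚ) ∈ collatzSemigroup := by
  simpa using mul_mem two_mem ha

theorem inv_two_mul_mem {a : ℕ} (ha : (a : ℚ)⁻¹ ∈ collatzSemigroup) :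
    ((2 * a : ℕ) : ℚ)⁻¹ ∈ collatzSemigroup := by
  simpa [mul_comm] using mul_mem inv_two_mem ha

theorem mem_of_div_mem {a b : ℚ} (hab : a / b ∈ collatzSemigroup) (hb : b ∈ collatzSemigroup) :
    a ∈ collatzSemigroup := by
  simpa [(pos_of_mem hb).ne'] using mul_mem hab hb

theorem inv_mem_of_div_mem {a b : ℚ} (hab : a / b ∈ collatzSemigroup)
    (ha : a⁻¹ ∈ collatzSemigroup) : b⁻¹ ∈ collatzSemigroup := by
  have ha₀ : a ≠ 0 := (inv_pos.1 (pos_of_mem ha)).ne'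
  simpa [div_eq_mul_inv, ha₀] using mul_mem ha hab

theorem div_mem_trans {a b c : ℚ} (hab : a / b ∈ collatzSemigroup)
    (hbc : b / c ∈ collatzSemigroup) : a / c ∈ collatzSemigroup := by
  have hb : b ≠ 0 := (div_ne_zero_iff.1 (pos_of_mem hbc).ne').1
  simpa only [div_mul_div_cancel₀ hb] using mul_mem hab hbc

theorem div_mem_of_div_two_mul_mem {a : ℚ} {b : ℕ}
    (h : a / (2 * b : ℕ) ∈ collatzSemigroup) : a / b ∈ collatzSemigroup := by
  convert mul_mem two_mem h using 1
  push_cast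
  ring

theorem four_mul_add_one_div_mem (k : ℕ) :
    ((4 * k + 1 : ℕ) : ℚ) / (3 * k + 1 : ℕ) ∈ collatzSemigroup :=
  div_mem_of_div_two_mul_mem (div_mem_of_three_mul_add_one_eq (by ring))

theorem eight_mul_add_three_div_mem (k : ℕ) :
    ((8 * k + 3 : ℕ) : ℚ) / (9 * k + 4 : ℕ) ∈ collatzSemigroup :=
  div_mem_of_div_two_mul_mem <| div_mem_trans (b := (12 * k + 5 : ℕ))
    (div_mem_of_three_mul_add_one_eq (by ring)) (div_mem_of_three_mul_add_one_eq (by ring))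

-- Two Collatz steps lead from `5 * (4 * k + 3)` to `5 * (9 * k + 7)`.
theorem four_mul_add_three_div_mem (k : ℕ) :
    ((4 * k + 3 : ℕ) : ℚ) / (9 * k + 7 : ℕ) ∈ collatzSemigroup := by
  have h : ((5 * (4 * k + 3) : ℕ) : ℚ) / (5 * (9 * k + 7) : ℕ) ∈ collatzSemigroup :=
    div_mem_trans (b := (30 * k + 23 : ℕ))
      (div_mem_of_three_mul_add_one_eq (by ring)) (div_mem_of_three_mul_add_one_eq (by ring))
  rwa [Nat.cast_mul, Nat.cast_mul, mul_div_mul_left _ _ (by norm_num)] at h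

theorem mem_of_three_mul_mul_add_one_eq {x y s : ℕ} (h : 3 * (x * y) + 1 = 2 * s)
    (hx : (x : ℚ)⁻¹ ∈ collatzSemigroup) (hs : (s : ℚ) ∈ collatzSemigroup) :
    (y : ℚ) ∈ collatzSemigroup := by
  have hxy := mem_of_div_mem (div_mem_of_three_mul_add_one_eq h) hs
  have hx₀ : (x : ℚ) ≠ 0 := (inv_pos.1 (pos_of_mem hx)).ne'
  simpa [hx₀] using mul_mem hx hxy

theorem mem_of_three_mul_mul_add_one_eq_sq {c y z : ℕ} (h : 3 * (c * y) + 1 = (2 * z) ^ 2)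
    (hc : (c : ℚ)⁻¹ ∈ collatzSemigroup) (hz : (z : ℚ) ∈ collatzSemigroup) :
    (y : ℚ) ∈ collatzSemigroup :=
  mem_of_three_mul_mul_add_one_eq (s := 2 * (z * z)) (by rw [h]; ring) hc
    (two_mul_mem (by simpa using mul_mem hz hz))

theorem inv_mem_of_three_mul_mul_add_one_eq {x y s N : ℕ} (h : 3 * (x * y) + 1 = 2 * (s * N))
    (hx : (x : ℚ)⁻¹ ∈ collatzSemigroup) (hy : (y : ℚ)⁻¹ ∈ collatzSemigroup)
    (hs : (s : ℚ) ∈ collatzSemigroup) : (N : ℚ)⁻¹ ∈ collatzSemigroup := by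
  have hxy : ((x * y : ℕ) : ℚ)⁻¹ ∈ collatzSemigroup := by
    simpa [mul_comm] using mul_mem hx hy
  have hsN := inv_mem_of_div_mem (div_mem_of_three_mul_add_one_eq h) hxy
  have hs₀ : (s : ℚ) ≠ 0 := (pos_of_mem hs).ne'
  simpa [hs₀, mul_comm] using mul_mem hs hsN

theorem five_div_seven_mem : (5 / 7 : ℚ) ∈ collatzSemigroup := by
  have h₇ : ((7 : ℕ) : ℚ) / (13 : ℕ) ∈ collatzSemigroup :=
    div_mem_trans (b := (11 : ℕ))
      (div_mem_of_three_mul_add_one_eq rfl) (eight_mul_add_three_div_mem 1)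
  have h₆₅ : ((65 : ℕ) : ℚ) / (49 : ℕ) ∈ collatzSemigroup := four_mul_add_one_div_mem 16
  convert mul_mem h₇ h₆₅ using 1
  norm_num

theorem inv_five_mem : (5 : ℚ)⁻¹ ∈ collatzSemigroup := by
  have h₇ : ((7 : ℕ) : ℚ) / (11 : ℕ) ∈ collatzSemigroup := div_mem_of_three_mul_add_one_eq rfl
  have h₄₃ : ((43 : ℕ) : ℚ) / (65 : ℕ) ∈ collatzSemigroup := div_mem_of_three_mul_add_one_eq rfl
  have h₁₄₃ : ((143 : ℕ) : ℚ) / (215 : ℕ) ∈ collatzSemigroup :=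
    div_mem_of_three_mul_add_one_eq rfl
  convert mul_mem (mul_mem h₄₃ h₁₄₃) (mul_mem five_div_seven_mem h₇) using 1
  norm_num

theorem inv_seven_mem : (7 : ℚ)⁻¹ ∈ collatzSemigroup := by
  convert mul_mem inv_five_mem five_div_seven_mem using 1
  norm_num

/-- The inverses of all numbers below `n` prime to `3` lie in the semigroup: the hypothesis of the
induction on `n`. -/
def InvMemBelow (n : ℕ) : Prop :=
  ∀ m < n, ¬ 3 ∣ m → (m : ℚ)⁻¹ ∈ collatzSemigroup

namespace InvMemBelow

variable {n : ℕ}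

theorem eight_mul_add_three_mem (hn : InvMemBelow n) {k : ℕ}
    (hk : 9 * (8 * k + 3) ≤ 16 * n)
    (ih : ∀ M < 8 * k + 3, 0 < M → (M : ℚ) ∈ collatzSemigroup) :
    ((8 * k + 3 : ℕ) : ℚ) ∈ collatzSemigroup := by
  refine mem_of_div_mem (eight_mul_add_three_div_mem k) ?_
  obtain ⟨j, rfl | rfl⟩ := k.even_or_odd'
  · rw [show 9 * (2 * j) + 4 = 2 * (9 * j + 2) by ring]
    exact two_mul_mem (ih _ (by omega) (by omega))
  · have hz := ih (9 * j + 7) (by omega) (by omega)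
    have hc := hn (6 * j + 5) (by omega) (by omega)
    exact mem_of_three_mul_mul_add_one_eq_sq (by ring) hc hz

theorem eight_mul_add_seven_mem (hn : InvMemBelow n) {k : ℕ}
    (hk : 9 * (8 * k + 7) ≤ 16 * n)
    (ih : ∀ M < 8 * k + 7, 0 < M → (M : ℚ) ∈ collatzSemigroup) :
    ((8 * k + 7 : ℕ) : ℚ) ∈ collatzSemigroup := by
  suffices hw : ((9 * k + 8 : ℕ) : ℚ) ∈ collatzSemigroup by
    convert mem_of_div_mem (four_mul_add_three_div_mem (2 * k + 1)) ?_ using 2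
    · ring
    · convert two_mul_mem hw using 2
      ring
  obtain ⟨i, hi⟩ : ∃ i, k = 2 * i ∨ k = 4 * i + 1 ∨ k = 4 * i + 3 :=
    ⟨if k % 2 = 0 then k / 2 else k / 4, by split_ifs <;> omega⟩
  rcases hi with rfl | rfl | rfl
  · rw [show 9 * (2 * i) + 8 = 2 * (9 * i + 4) by ring]
    exact two_mul_mem (ih _ (by omega) (by omega))
  · rw [show 9 * (4 * i + 1) + 8 = 4 * (9 * i + 4) + 1 by ring]
    exact mem_of_div_mem (four_mul_add_one_div_mem _) (ih _ (by omega) (by omega))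
  · have hz := ih (27 * i + 26) (by omega) (by omega)
    have hc := hn (18 * i + 17) (by omega) (by omega)
    refine mem_of_div_mem (b := (54 * i + 53 : ℕ)) (div_mem_of_three_mul_add_one_eq (by ring)) ?_
    exact mem_of_three_mul_mul_add_one_eq_sq (by ring) hc hz

theorem natCast_mem (hn : InvMemBelow n) {N : ℕ} (hN : 0 < N)
    (hNn : 9 * N ≤ 16 * n) : (N : ℚ) ∈ collatzSemigroup := by
  induction N using Nat.strong_induction_on with
  | _ N ih =>
    have ih' : ∀ M < N, 0 < M → (M : ℚ) ∈ collatzSemigroup :=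
      fun M hM hM₀ => ih M hM hM₀ (by omega)
    obtain ⟨k, hk⟩ : ∃ k, N = 2 * k ∨ N = 4 * k + 1 ∨ N = 8 * k + 3 ∨ N = 8 * k + 7 :=
      ⟨if N % 2 = 0 then N / 2 else if N % 4 = 1 then N / 4 else N / 8, by split_ifs <;> omega⟩
    rcases hk with rfl | rfl | rfl | rfl
    · exact two_mul_mem (ih' k (by omega) (by omega))
    · rcases k.eq_zero_or_pos with rfl | hk
      · simpa using one_mem
      · exact mem_of_div_mem (four_mul_add_one_div_mem k) (ih' _ (by omega) (by omega))
    · exact hn.eight_mul_add_three_mem hNn ih'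
    · exact hn.eight_mul_add_seven_mem hNn ih'

theorem inv_mem_of_three_mul_mul_add_one_eq (hn : InvMemBelow n) {x y s N : ℕ}
    (h : 3 * (x * y) + 1 = 2 * (s * N)) (hx : (x : ℚ)⁻¹ ∈ collatzSemigroup)
    (hy : y < n) (hy₃ : ¬ 3 ∣ y) (hs : 9 * s ≤ 16 * n) : (N : ℚ)⁻¹ ∈ collatzSemigroup := by
  have hs₀ : 0 < s := Nat.pos_of_ne_zero (by rintro rfl; simp at h)
  exact collatzSemigroup.inv_mem_of_three_mul_mul_add_one_eq h hx (hn y hy hy₃)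
    (hn.natCast_mem hs₀ hs)

theorem inv_mem_of_mod_3_eq_2 (hn : InvMemBelow n) {m : ℕ} (h : m % 3 = 2)
    (h₉ : m % 9 ≠ 5) (hmn : 2 * m ≤ 3 * n) : (m : ℚ)⁻¹ ∈ collatzSemigroup := by
  obtain ⟨k, rfl⟩ : ∃ k, m = 3 * k + 2 := ⟨m / 3, by omega⟩
  exact inv_mem_of_div_mem (div_mem_of_three_mul_add_one_eq (m := 2 * k + 1) (by ring))
    (hn _ (by omega) (by omega))

theorem inv_mem_of_mod_9_eq_4 (hn : InvMemBelow n) {m : ℕ} (h : m % 9 = 4)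
    (h₂₇ : m % 27 ≠ 4) (hmn : 8 * m ≤ 9 * n) : (m : ℚ)⁻¹ ∈ collatzSemigroup := by
  obtain ⟨k, rfl⟩ : ∃ k, m = 9 * k + 4 := ⟨m / 9, by omega⟩
  exact inv_mem_of_div_mem (eight_mul_add_three_div_mem k) (hn _ (by omega) (by omega))

theorem inv_mem_of_mod_9_eq_7 (hn : InvMemBelow n) {m : ℕ} (h : m % 9 = 7)
    (h₂₇ : m % 27 ≠ 7) (hmn : 4 * m ≤ 9 * n) : (m : ℚ)⁻¹ ∈ collatzSemigroup := by
  obtain ⟨k, rfl⟩ : ∃ k, m = 9 * k + 7 := ⟨m / 9, by omega⟩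
  exact inv_mem_of_div_mem (four_mul_add_three_div_mem k) (hn _ (by omega) (by omega))

theorem inv_twelve_mul_add_thirteen_mem (hn : InvMemBelow n) {t : ℕ} (ht : t % 3 ≠ 1)
    (h : ((12 * t + 11 : ℕ) : ℚ)⁻¹ ∈ collatzSemigroup) (htn : 10 * t + 11 < n) :
    ((12 * t + 13 : ℕ) : ℚ)⁻¹ ∈ collatzSemigroup :=
  hn.inv_mem_of_three_mul_mul_add_one_eq (y := 10 * t + 11) (s := 15 * t + 14) (by ring) h htn
    (by omega) (by omega)

theorem inv_mem_of_mod_36_eq_25 (hn : InvMemBelow n) {m : ℕ} (h : m % 36 = 25)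
    (hmn : m ≤ n + 6) : (m : ℚ)⁻¹ ∈ collatzSemigroup := by
  by_cases h₂₇ : m % 27 = 7
  · obtain ⟨t, rfl⟩ : ∃ t, m = 108 * t + 61 := ⟨m / 108, by omega⟩
    exact hn.inv_mem_of_three_mul_mul_add_one_eq (x := 54 * t + 29) (y := 12 * t + 7)
      (s := 9 * t + 5) (by ring) (hn _ (by omega) (by omega)) (by omega) (by omega) (by omega)
  · exact hn.inv_mem_of_mod_9_eq_7 (by omega) h₂₇ (by omega)

theorem inv_mem_of_mod_36_eq_5 (hn : InvMemBelow n) (h : n % 36 = 5) (h₅ : n ≠ 5) :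
    (n : ℚ)⁻¹ ∈ collatzSemigroup := by
  obtain h₁₀₈ | h₂₁₆ | h₂₁₆ : n % 108 ≠ 5 ∨ n % 216 = 5 ∨ n % 216 = 113 := by omega
  · obtain ⟨t, rfl⟩ : ∃ t, n = 36 * t + 5 := ⟨n / 36, by omega⟩
    have hx := hn.inv_mem_of_mod_3_eq_2 (m := 36 * t + 11) (by omega) (by omega) (by omega)
    exact hn.inv_mem_of_three_mul_mul_add_one_eq (y := 22 * t + 3) (s := 33 * t + 10) (by ring) hx
      (by omega) (by omega) (by omega)
  · obtain ⟨t, rfl⟩ : ∃ t, n = 216 * t + 221 := ⟨n / 216 - 1, by omega⟩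
    have hx := hn (216 * t + 209) (by omega) (by omega)
    exact hn.inv_mem_of_three_mul_mul_add_one_eq (y := 42 * t + 43) (s := 63 * t + 61) (by ring) hx
      (by omega) (by omega) (by omega)
  · obtain ⟨t, rfl⟩ : ∃ t, n = 216 * t + 113 := ⟨n / 216, by omega⟩
    have hx := hn.inv_mem_of_mod_3_eq_2 (m := 216 * t + 125) (by omega) (by omega) (by omega)
    exact hn.inv_mem_of_three_mul_mul_add_one_eq (y := 174 * t + 91) (s := 261 * t + 151)
      (by ring) hx (by omega) (by omega) (by omega)

theorem inv_mem_of_mod_36_eq_7 (hn : InvMemBelow n) (h : n % 36 = 7) (h₇ : n ≠ 7) :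
    (n : ℚ)⁻¹ ∈ collatzSemigroup := by
  by_cases h₂₇ : n % 27 = 7
  · obtain ⟨t, rfl⟩ : ∃ t, n = 108 * t + 7 := ⟨n / 108, by omega⟩
    have hx' := hn.inv_mem_of_mod_3_eq_2 (m := 12 * (9 * t) + 11)
      (by omega) (by omega) (by omega)
    have hx := hn.inv_twelve_mul_add_thirteen_mem (by omega) hx' (by omega)
    exact hn.inv_mem_of_three_mul_mul_add_one_eq (y := 78 * t + 5) (s := 117 * t + 14) (by ring) hx
      (by omega) (by omega) (by omega)
  · exact hn.inv_mem_of_mod_9_eq_7 (by omega) h₂₇ (by omega)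

theorem inv_mem_of_mod_36_eq_19 (hn : InvMemBelow n) (h : n % 36 = 19) (h₅₅ : n ≠ 55) :
    (n : ℚ)⁻¹ ∈ collatzSemigroup := by
  obtain h₇₂ | ⟨h₇₂, h₂₁₆⟩ | h₂₁₆ : n % 72 = 19 ∨ n % 72 = 55 ∧ n % 216 ≠ 55 ∨ n % 216 = 55 := by
    omega
  · obtain ⟨t, rfl⟩ : ∃ t, n = 72 * t + 19 := ⟨n / 72, by omega⟩
    have hx := hn (24 * t + 5) (by omega) (by omega)
    exact hn.inv_mem_of_three_mul_mul_add_one_eq (y := 18 * t + 5) (s := 9 * t + 2) (by ring) hx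
      (by omega) (by omega) (by omega)
  · obtain ⟨t, rfl⟩ : ∃ t, n = 72 * t + 55 := ⟨n / 72, by omega⟩
    have hx := hn.inv_mem_of_mod_36_eq_25 (m := 72 * t + 61) (by omega) (by omega)
    exact hn.inv_mem_of_three_mul_mul_add_one_eq (y := 4 * t + 3) (s := 6 * t + 5) (by ring) hx
      (by omega) (by omega) (by omega)
  · obtain ⟨t, rfl⟩ : ∃ t, n = 216 * t + 55 := ⟨n / 216, by omega⟩
    have hx := hn.inv_mem_of_mod_9_eq_4 (m := 216 * t + 67) (by omega) (by omega) (by omega)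
    exact hn.inv_mem_of_three_mul_mul_add_one_eq (y := 114 * t + 29) (s := 171 * t + 53)
      (by ring) hx (by omega) (by omega) (by omega)

theorem inv_mem_of_mod_36_eq_23 (hn : InvMemBelow n) (h : n % 36 = 23) :
    (n : ℚ)⁻¹ ∈ collatzSemigroup := by
  obtain ⟨t, rfl⟩ : ∃ t, n = 36 * t + 23 := ⟨n / 36, by omega⟩
  have hx := hn.inv_mem_of_mod_36_eq_25 (m := 36 * t + 25) (by omega) (by omega)
  exact hn.inv_mem_of_three_mul_mul_add_one_eq (y := 30 * t + 19) (s := 45 * t + 31) (by ring) hx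
    (by omega) (by omega) (by omega)

theorem inv_mem_of_mod_36_eq_31 (hn : InvMemBelow n) (h : n % 36 = 31) :
    (n : ℚ)⁻¹ ∈ collatzSemigroup := by
  by_cases h₂₇ : n % 27 = 4
  · obtain ⟨t, rfl⟩ : ∃ t, n = 108 * t + 31 := ⟨n / 108, by omega⟩
    have hx := hn (54 * t + 17) (by omega) (by omega)
    exact hn.inv_mem_of_three_mul_mul_add_one_eq (y := 60 * t + 17) (s := 45 * t + 14) (by ring) hx
      (by omega) (by omega) (by omega)
  · exact hn.inv_mem_of_mod_9_eq_4 (by omega) h₂₇ (by omega)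

theorem inv_mem_of_mod_12_eq_1 (hn : InvMemBelow n) (h : n % 12 = 1) (h₃₆ : n % 36 ≠ 25)
    (h₁ : n ≠ 1) : (n : ℚ)⁻¹ ∈ collatzSemigroup := by
  obtain ⟨t, rfl⟩ : ∃ t, n = 12 * t + 13 := ⟨n / 12 - 1, by omega⟩
  have hx := hn (12 * t + 11) (by omega) (by omega)
  exact hn.inv_twelve_mul_add_thirteen_mem (by omega) hx (by omega)

theorem inv_mem (hn : InvMemBelow n) (h₃ : ¬ 3 ∣ n) :
    (n : ℚ)⁻¹ ∈ collatzSemigroup := by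
  obtain rfl | rfl | rfl | rfl | hbase :
      n = 1 ∨ n = 5 ∨ n = 7 ∨ n = 55 ∨ n ≠ 1 ∧ n ≠ 5 ∧ n ≠ 7 ∧ n ≠ 55 := by
    omega
  · simpa using one_mem
  · exact inv_five_mem
  · exact inv_seven_mem
  · convert mul_mem inv_five_mem (hn 11 (by decide) (by decide)) using 1
    norm_num
  obtain ⟨h₁, h₅, h₇, h₅₅⟩ := hbase
  have residues : n % 2 = 0 ∨ (n % 3 = 2 ∧ n % 9 ≠ 5) ∨ (n % 12 = 1 ∧ n % 36 ≠ 25) ∨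
      n % 36 = 5 ∨ n % 36 = 7 ∨ n % 36 = 19 ∨ n % 36 = 23 ∨ n % 36 = 25 ∨ n % 36 = 31 := by
    omega
  rcases residues with h | ⟨h, h₉⟩ | ⟨h, h₃₆⟩ | h | h | h | h | h | h
  · obtain ⟨k, rfl⟩ : ∃ k, n = 2 * k := ⟨n / 2, by omega⟩
    exact inv_two_mul_mem (hn k (by omega) (by omega))
  · exact hn.inv_mem_of_mod_3_eq_2 h h₉ (by omega)
  · exact hn.inv_mem_of_mod_12_eq_1 h h₃₆ h₁
  · exact hn.inv_mem_of_mod_36_eq_5 h h₅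
  · exact hn.inv_mem_of_mod_36_eq_7 h h₇
  · exact hn.inv_mem_of_mod_36_eq_19 h h₅₅
  · exact hn.inv_mem_of_mod_36_eq_23 h
  · exact hn.inv_mem_of_mod_36_eq_25 h (by omega)
  · exact hn.inv_mem_of_mod_36_eq_31 h

end InvMemBelow

theorem invMemBelow (n : ℕ) : InvMemBelow n := by
  induction n with
  | zero => exact fun m hm => absurd hm m.not_lt_zero
  | succ n ih =>
    intro m hm h₃
    rcases Nat.lt_succ_iff_lt_or_eq.1 hm with hlt | rfl
    · exact ih m hlt h₃
    · exact ih.inv_mem h₃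

end collatzSemigroup

theorem posInt_mem_collatzSemigroup (n : ℕ) (hn : 0 < n) :
    (n : ℚ) ∈ collatzSemigroup :=
  (collatzSemigroup.invMemBelow n).natCast_mem hn (by omega)
end

section
/- For all real x ≥ 256, π(6x) + π((6/5)x) - 2π(x) < x - 2, where π is the prime counting function. -/
open Nat

/-!
For large `x`, every prime in `(x, c * x]` contributes at least `log x` to `θ (c * x)`, and
Chebyshev's bound `θ y ≤ y * log 4` gives
`(π (6 * x) + π (6 / 5 * x) - 2 * π x) * log x ≤ (6 + 6 / 5) * log 4 * x`. Since
`(6 + 6 / 5) * log 4 < 9.982`, this suffices as soon as `log x ≥ 10`, i.e. from `x = 22027` on.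

Below that threshold, `π` is monotone, so on a window `[a, b)` it is enough to compare
`π (6 * b) + π (6 / 5 * b)` with `a - 2 + 2 * π a`. Twelve windows cover `[256, 22027)`, and the
values of `π` at their ends are computed by sieving.
-/

/-- The combination `π (6x) + π (6x/5) - 2 π (x)`. The floors only serve to evaluate `π : ℕ → ℕ` at
real arguments. -/
noncomputable def primeCountingCombination (x : ℝ) : ℝ :=
  (primeCounting ⌊6 * x⌋₊ : ℝ) + (primeCounting ⌊(6 / 5) * x⌋₊ : ℝ)
    - 2 * (primeCounting ⌊x⌋₊ : ℝ)

section Chebyshev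

variable {c x y : ℝ}

lemma primeCounting_sub_mul_log_le_theta_sub (hx : 0 < x) (hxy : x ≤ y) :
    ((primeCounting ⌊y⌋₊ : ℝ) - primeCounting ⌊x⌋₊) * Real.log x ≤
      Chebyshev.theta y - Chebyshev.theta x := by
  have hsub : primesLE ⌊x⌋₊ ⊆ primesLE ⌊y⌋₊ := primesLE_mono (Nat.floor_mono hxy)
  calc ((primeCounting ⌊y⌋₊ : ℝ) - primeCounting ⌊x⌋₊) * Real.log x
      = ∑ _p ∈ primesLE ⌊y⌋₊ \ primesLE ⌊x⌋₊, Real.log x := by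
        rw [Finset.sum_const, nsmul_eq_mul, Finset.cast_card_sdiff hsub,
          primesLE_card_eq_primeCounting, primesLE_card_eq_primeCounting]
    _ ≤ ∑ p ∈ primesLE ⌊y⌋₊ \ primesLE ⌊x⌋₊, Real.log p := by
        refine Finset.sum_le_sum fun p hp ↦ Real.log_le_log hx ?_
        simp only [Finset.mem_sdiff, mem_primesLE, not_and'] at hp
        exact (Nat.lt_of_floor_lt (not_le.1 (hp.2 hp.1.2))).le
    _ = Chebyshev.theta y - Chebyshev.theta x := by
        rw [Finset.sum_sdiff_eq_sub hsub, Chebyshev.theta_eq_sum_primesLE,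
          Chebyshev.theta_eq_sum_primesLE]

lemma primeCounting_mul_sub_mul_log_le (hx : 0 < x) (hc : 1 ≤ c) :
    ((primeCounting ⌊c * x⌋₊ : ℝ) - primeCounting ⌊x⌋₊) * Real.log x ≤ c * Real.log 4 * x :=
  calc ((primeCounting ⌊c * x⌋₊ : ℝ) - primeCounting ⌊x⌋₊) * Real.log x
      ≤ Chebyshev.theta (c * x) - Chebyshev.theta x :=
        primeCounting_sub_mul_log_le_theta_sub hx (le_mul_of_one_le_left hx.le hc)
    _ ≤ Chebyshev.theta (c * x) := sub_le_self _ (Chebyshev.theta_nonneg x)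
    _ ≤ Real.log 4 * (c * x) := Chebyshev.theta_le_log4_mul_x (by positivity)
    _ = c * Real.log 4 * x := by ring

lemma log_four_lt : Real.log 4 < 1.3863 := by
  have h := Real.log_two_lt_d9
  rw [show (4 : ℝ) = 2 ^ 2 by norm_num, Real.log_pow]
  norm_num at h ⊢
  linarith

lemma ten_le_log_of_le (hx : 22027 ≤ x) : 10 ≤ Real.log x := by
  rw [Real.le_log_iff_exp_le (by linarith)]
  calc Real.exp 10 = Real.exp 1 ^ 10 := by rw [← Real.exp_nat_mul]; norm_num
    _ ≤ 2.7182818286 ^ 10 := by gcongr; exact Real.exp_one_lt_d9.le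
    _ ≤ 22027 := by norm_num
    _ ≤ x := hx

lemma primeCountingCombination_lt_of_le (hx : 22027 ≤ x) :
    primeCountingCombination x < x - 2 := by
  have hlog := ten_le_log_of_le hx
  have hx0 : 0 < x := by linarith
  refine lt_of_mul_lt_mul_right ?_ (show 0 ≤ Real.log x by linarith)
  calc primeCountingCombination x * Real.log x
      = ((primeCounting ⌊6 * x⌋₊ : ℝ) - primeCounting ⌊x⌋₊) * Real.log x
        + ((primeCounting ⌊(6 / 5) * x⌋₊ : ℝ) - primeCounting ⌊x⌋₊) * Real.log x := by
        rw [primeCountingCombination]; ring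
    _ ≤ 6 * Real.log 4 * x + 6 / 5 * Real.log 4 * x :=
        add_le_add (primeCounting_mul_sub_mul_log_le hx0 (by norm_num))
          (primeCounting_mul_sub_mul_log_le hx0 (by norm_num))
    _ = 7.2 * Real.log 4 * x := by ring
    _ ≤ 7.2 * 1.3863 * x := by gcongr; exact log_four_lt.le
    _ < (x - 2) * 10 := by linarith
    _ ≤ (x - 2) * Real.log x := by gcongr; linarith

end Chebyshev

section Sieve

variable {k m n : ℕ}

lemma prime_iff_coprime_factorial (hk : k < n) (hn : n < (k + 1) ^ 2) :
    n.Prime ↔ n.Coprime k ! := by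
  have hn1 : n ≠ 1 := by rintro rfl; simp_all
  rw [coprime_factorial_iff hn1]
  refine ⟨fun hp ↦ hp.minFac_eq.symm ▸ hk, fun hmin ↦ ?_⟩
  by_contra hp
  exact ((Nat.pow_le_pow_left hmin 2).trans (Nat.minFac_sq_le_self (by lia) hp)).not_gt hn

lemma primeCounting'_add_eq_add_count_coprime (hk : k < m) (hn : m + n ≤ (k + 1) ^ 2) :
    primeCounting' (m + n) =
      primeCounting' m + Nat.count (fun i ↦ (m + i).Coprime k !) n := by
  rw [primeCounting', Nat.count_add, Nat.count_eq_card_filter_range (fun i ↦ Nat.Prime (m + i)),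
    Nat.count_eq_card_filter_range (fun i ↦ (m + i).Coprime k !)]
  congr 2
  refine Finset.filter_congr fun i hi ↦ ?_
  rw [Finset.mem_range] at hi
  exact prime_iff_coprime_factorial (by lia) (by lia)

/-- The number of `i < n` such that `p (m + i)`, computed by halving the range `d` times. Unlike
`Nat.count`, this can be evaluated in the kernel for large `n` without deep recursion; for the same
reason the base case is a bare recursor. -/
def countBisect (p : ℕ → Prop) [DecidablePred p] : ℕ → ℕ → ℕ → ℕ
  | 0, m, n => n.rec 0 fun i s ↦ s + if p (m + i) then 1 else 0
  | d + 1, m, n => countBisect p d m (n / 2) + countBisect p d (m + n / 2) (n - n / 2)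

lemma countBisect_eq_count (p : ℕ → Prop) [DecidablePred p] (d m n : ℕ) :
    countBisect p d m n = Nat.count (fun i ↦ p (m + i)) n := by
  induction d generalizing m n with
  | zero =>
    induction n with
    | zero => rfl
    | succ n ih => rw [Nat.count_succ, ← ih]; rfl
  | succ d ih =>
    have hsplit := Nat.count_add (fun i ↦ p (m + i)) (n / 2) (n - n / 2)
    rw [Nat.add_sub_of_le (Nat.div_le_self n 2)] at hsplit
    simp only [countBisect, ih, hsplit, add_assoc]

/-- Pairs `(n, u)` with `u` the number of primes below `n`. From `256` on, the `n` are the numbers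
`a`, `6 * b` and `⌈6 * b / 5⌉` for the windows `[a, b)` of `isChain_isGoodWindow`; the first four
entries let the sieve start from nothing. -/
def primeCountingTable : List (ℕ × ℕ) :=
  [(2, 0), (3, 1), (8, 4), (63, 18), (256, 54), (312, 64), (375, 74), (390, 77), (468, 91),
    (501, 95), (602, 110), (664, 121), (797, 138), (910, 155), (1092, 182), (1281, 207),
    (1538, 242), (1872, 286), (1873, 286), (2248, 334), (2340, 346), (2838, 412), (3006, 431),
    (3406, 478), (3984, 549), (4483, 608), (5380, 708), (5460, 721), (7361, 937), (7686, 974),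
    (8834, 1100), (11238, 1357), (12624, 1508), (15149, 1769), (17028, 1963), (26433, 2904),
    (26898, 2951), (44166, 4596), (75744, 7463), (132162, 12339)]

lemma isChain_primeCountingTable :
    primeCountingTable.IsChain fun e f ↦ f.1.sqrt < e.1 ∧ e.1 ≤ f.1 ∧
      f.2 = e.2 + countBisect (fun i ↦ i.Coprime f.1.sqrt !) 8 e.1 (f.1 - e.1) := by
  decide +kernel

lemma primeCounting'_of_mem_primeCountingTable :
    ∀ e ∈ primeCountingTable, primeCounting' e.1 = e.2 := by
  refine isChain_primeCountingTable.induction _ _ ?_ ?_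
  · rintro ⟨m, u⟩ ⟨n, v⟩ ⟨hsqrt, hmn, hv⟩ hu
    dsimp only at hsqrt hmn hv hu ⊢
    obtain ⟨l, rfl⟩ := Nat.exists_eq_add_of_le hmn
    rw [hv, countBisect_eq_count, Nat.add_sub_cancel_left, ← hu]
    exact primeCounting'_add_eq_add_count_coprime hsqrt (Nat.lt_succ_sqrt' _).le
  · intro _
    simp [primeCountingTable, primeCounting'_eq_zero_iff]

end Sieve

section Windows

variable {a b : ℕ} {x : ℝ}

/-- The numerical condition under which monotonicity of `π` gives the theorem for all real `x` in
`[a, b)`. Recall that `primeCounting' n` counts the primes strictly below `n`. -/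
def IsGoodWindow (a b : ℕ) : Prop :=
  primeCounting' (6 * b) + primeCounting' (6 * b ⌈/⌉ 5) + 2 < a + 2 * primeCounting' a

lemma primeCounting_floor_le_primeCounting' {n : ℕ} (hx : 0 ≤ x) (hxn : x < n) :
    primeCounting ⌊x⌋₊ ≤ primeCounting' n :=
  monotone_primeCounting' ((Nat.floor_lt hx).2 hxn)

lemma primeCounting'_le_primeCounting_floor {n : ℕ} (hnx : n ≤ x) :
    primeCounting' n ≤ primeCounting ⌊x⌋₊ :=
  monotone_primeCounting' ((Nat.le_floor hnx).trans (Nat.le_succ _))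

lemma IsGoodWindow.primeCountingCombination_lt (h : IsGoodWindow a b) (hax : a ≤ x)
    (hxb : x < b) : primeCountingCombination x < x - 2 := by
  have hx : 0 ≤ x := a.cast_nonneg.trans hax
  have hceil : (6 * b : ℝ) ≤ 5 * (6 * b ⌈/⌉ 5 : ℕ) :=
    mod_cast (le_smul_ceilDiv (by norm_num : 0 < 5) : 6 * b ≤ 5 • (6 * b ⌈/⌉ 5))
  have h6 : primeCounting ⌊6 * x⌋₊ ≤ primeCounting' (6 * b) :=
    primeCounting_floor_le_primeCounting' (by positivity) (by push_cast; linarith)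
  have h65 : primeCounting ⌊(6 / 5) * x⌋₊ ≤ primeCounting' (6 * b ⌈/⌉ 5) :=
    primeCounting_floor_le_primeCounting' (by positivity) (by linarith)
  have h1 : primeCounting' a ≤ primeCounting ⌊x⌋₊ := primeCounting'_le_primeCounting_floor hax
  have hnat : (primeCounting ⌊6 * x⌋₊ : ℝ) + primeCounting ⌊(6 / 5) * x⌋₊ + 2 <
      a + 2 * primeCounting ⌊x⌋₊ := by
    rw [IsGoodWindow] at h
    exact_mod_cast (by lia : _ < _)
  rw [primeCountingCombination]
  linarith

lemma primeCountingCombination_lt_of_reflTransGen (h : Relation.ReflTransGen IsGoodWindow a b)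
    (hax : a ≤ x) (hxb : x < b) : primeCountingCombination x < x - 2 := by
  induction h with
  | refl => exact absurd hxb hax.not_gt
  | @tail m n _ hmn ih =>
    rcases lt_or_ge x m with hxm | hmx
    · exact ih hxm
    · exact hmn.primeCountingCombination_lt hmx hxb

lemma isChain_isGoodWindow :
    [256, 312, 390, 501, 664, 910, 1281, 1873, 2838, 4483, 7361, 12624, 22027].IsChain
      IsGoodWindow := by
  have h := primeCounting'_of_mem_primeCountingTable
  simp only [primeCountingTable, List.forall_mem_cons] at h
  simp [IsGoodWindow, Nat.ceilDiv_eq_add_pred_div, h]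

lemma primeCountingCombination_lt_of_lt (hx : 256 ≤ x) (hx' : x < 22027) :
    primeCountingCombination x < x - 2 :=
  primeCountingCombination_lt_of_reflTransGen
    (List.relationReflTransGen_of_exists_isChain_cons _ isChain_isGoodWindow rfl)
    (mod_cast hx) (mod_cast hx')

end Windows

theorem primeCounting_combination_bound (x : ℝ) (hx : 256 ≤ x) :
    (Nat.primeCounting ⌊6 * x⌋₊ : ℝ) + (Nat.primeCounting ⌊(6 / 5) * x⌋₊ : ℝ)
      - 2 * (Nat.primeCounting ⌊x⌋₊ : ℝ) < x - 2 :=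
  (lt_or_ge x 22027).elim (primeCountingCombination_lt_of_lt hx) primeCountingCombination_lt_of_le
end
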